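/- arXiv:2310.02387 — 2 statements merged into one kernel-verified Lean document; each statement's English description precedes it below -/
import Mathlib

section
/- Let n ≥ 4 be an even integer, let A be the matrix defined below, and let i ∈ {0,…,n/2−2}. Consider any fictitious play sequence (i^{(t)}, j^{(t)}) for the identical-payoff game with matrix A with (i^{(1)}, j^{(1)}) = (n, 1). Suppose T₃ ≥ 2 is a round such that: (i^{(T₃)}, j^{(T₃)}) = (n−i−1, n−i) and the pair (n−i−1, n−i) is not played at any round t < T₃; (i^{(T₃−1)}, j^{(T₃−1)}) = (i+1, n−i); R^{(T₃)}_r = 0 for every row r with i+2 ≤ r ≤ n−i−2; and C^{(T₃)}_c = 0 for every column c with i+2 ≤ c ≤ n−i−1. Then there exists a round T₄ > T₃ such that: (i) (i^{(T₄)}, j^{(T₄)}) = (n−i−1, i+2) and the pair (n−i−1, i+2) is not played at any round t < T₄; (ii) (i^{(t)}, j^{(t)}) = (n−i−1, n−i) for every t with T₃ ≤ t ≤ T₄−1; (iii) R^{(T₄)}_{n−i−1} ≥ (4i+4)·C^{(T₃)}_{n−i}; (iv) R^{(T₄)}_r = 0 for every row r with i+2 ≤ r ≤ n−i−2, and C^{(T₄)}_c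 = 0 for every column c with i+3 ≤ c ≤ n−i−1. -/
/-!
Write `k = n - i - 1`, so `n - i = k + 1`. Row `k` of `A` is supported on the columns `i + 2`
(value `4i + 5`) and `k + 1` (value `4i + 4`), and column `k + 1` is supported on the rows `i + 1`
(value `4i + 3`) and `k` (value `4i + 4`). As long as the column player keeps playing `k + 1` from
round `T3` on, row `k` gains strictly more than every other row, so it stays the unique best row
(`phase_invariant`). Meanwhile column `i + 2`, starting from `0`, gains `4i + 5` per round while
column `k + 1`, starting from `C₀ = C^{(T3)}_{k+1}`, gains `4i + 4`; every other column is constant.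
Hence the column player must eventually leave `k + 1`, and can leave it only for `i + 2`, after at
least `C₀` rounds. This bounds the cumulative utility of row `k` from below by `(4i + 4) C₀`.
The pair `(k, i + 2)` cannot have occurred before `T3`, as column `i + 2` has utility `0` there.
-/

open Finset

/-- The `n × n` payoff matrix `A` (1-based indices), closed form:
for `i ∈ {0,…,n/2−1}`: `A_{i+1,i+1} = 4i+2`, `A_{i+1,n−i} = 4i+3`, `A_{n−i,i+1} = 4i+1`;
for `i ∈ {1,…,n/2−1}`: `A_{n−i,n−i+1} = 4i`; all other entries `0`. -/
noncomputable def Amat (n i j : ℕ) : ℝ :=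
  if i = j ∧ 1 ≤ i ∧ i ≤ n / 2 then 4 * (i : ℝ) - 2
  else if i + j = n + 1 ∧ 1 ≤ i ∧ i ≤ n / 2 then 4 * (i : ℝ) - 1
  else if i + j = n + 1 ∧ 1 ≤ j ∧ j ≤ n / 2 then 4 * (j : ℝ) - 3
  else if j = i + 1 ∧ n / 2 + 1 ≤ i ∧ i ≤ n - 1 then 4 * ((n : ℝ) - (i : ℝ))
  else 0

/-- `x` is a probability vector over coordinates `{1,…,n}`. -/
def ProbVec (n : ℕ) (x : ℕ → ℝ) : Prop :=
  (∀ k ∈ Finset.Icc 1 n, 0 ≤ x k) ∧ ∑ k ∈ Finset.Icc 1 n, x k = 1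

/-- The common payoff `xᵀ A y`. -/
noncomputable def pay (n : ℕ) (x y : ℕ → ℝ) : ℝ :=
  ∑ i ∈ Finset.Icc 1 n, ∑ j ∈ Finset.Icc 1 n, x i * Amat n i j * y j

/-- `(x, y)` is an `ε`-approximate Nash equilibrium of the identical-payoff game with matrix `A`. -/
def IsNashEq (n : ℕ) (ε : ℝ) (x y : ℕ → ℝ) : Prop :=
  ProbVec n x ∧ ProbVec n y ∧
  (∀ x', ProbVec n x' → pay n x y ≥ pay n x' y - ε) ∧
  (∀ y', ProbVec n y' → pay n x y ≥ pay n x y' - ε)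

/-- `(I t, J t)` (for `t = 1, 2, …`) is a fictitious play sequence for the
identical-payoff game with matrix `A`. -/
def IsFPSeq (n : ℕ) (I J : ℕ → ℕ) : Prop :=
  (∀ t, 1 ≤ t → I t ∈ Finset.Icc 1 n ∧ J t ∈ Finset.Icc 1 n) ∧
  ∀ t, 2 ≤ t →
    (∀ i ∈ Finset.Icc 1 n,
      ∑ s ∈ Finset.Icc 1 (t - 1), Amat n i (J s) ≤
        ∑ s ∈ Finset.Icc 1 (t - 1), Amat n (I t) (J s)) ∧
    (∀ j ∈ Finset.Icc 1 n,
      ∑ s ∈ Finset.Icc 1 (t - 1), Amat n (I s) j ≤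
        ∑ s ∈ Finset.Icc 1 (t - 1), Amat n (I s) (J t))

/-- Cumulative utility of row `r` at round `t`. -/
noncomputable def Rcum (n : ℕ) (J : ℕ → ℕ) (t r : ℕ) : ℝ :=
  ∑ s ∈ Finset.Icc 1 (t - 1), Amat n r (J s)

/-- Cumulative utility of column `c` at round `t`. -/
noncomputable def Ccum (n : ℕ) (I : ℕ → ℕ) (t c : ℕ) : ℝ :=
  ∑ s ∈ Finset.Icc 1 (t - 1), Amat n (I s) c

/-- Empirical strategy at round `T` of the player playing the sequence `I`. -/
noncomputable def empir (T : ℕ) (I : ℕ → ℕ) (k : ℕ) : ℝ :=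
  (1 / (T : ℝ)) * ∑ s ∈ Finset.Icc 1 T, if I s = k then (1 : ℝ) else 0

/-- The `k`-th standard basis vector (pure strategy `k`). -/
noncomputable def purevec (k : ℕ) : ℕ → ℝ := fun m => if m = k then 1 else 0

lemma Amat_nonneg (n r c : ℕ) : 0 ≤ Amat n r c := by
  unfold Amat
  split_ifs with h1 h2 h3 h4
  · have : (1 : ℝ) ≤ r := by exact_mod_cast h1.2.1
    linarith
  · have : (1 : ℝ) ≤ r := by exact_mod_cast h2.2.1
    linarith
  · have : (1 : ℝ) ≤ c := by exact_mod_cast h3.2.1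
    linarith
  · have : (r : ℝ) ≤ n := by exact_mod_cast (by omega : r ≤ n)
    linarith
  · exact le_rfl

lemma Rcum_succ (n : ℕ) (J : ℕ → ℕ) (t r : ℕ) (ht : 1 ≤ t) :
    Rcum n J (t + 1) r = Rcum n J t r + Amat n r (J t) := by
  obtain ⟨s, rfl⟩ := Nat.exists_eq_add_of_le' ht
  simp only [Rcum, Nat.add_sub_cancel]
  exact Finset.sum_Icc_succ_top (by omega) _

lemma Ccum_succ (n : ℕ) (I : ℕ → ℕ) (t c : ℕ) (ht : 1 ≤ t) :
    Ccum n I (t + 1) c = Ccum n I t c + Amat n (I t) c := by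
  obtain ⟨s, rfl⟩ := Nat.exists_eq_add_of_le' ht
  simp only [Ccum, Nat.add_sub_cancel]
  exact Finset.sum_Icc_succ_top (by omega) _

lemma Amat_row_left {n i k : ℕ} (hnk : n = i + k + 1) (hk : i + 2 ≤ n / 2) :
    Amat n k (i + 2) = 4 * (i : ℝ) + 5 := by
  unfold Amat
  rw [if_neg (by omega), if_neg (by omega), if_pos (by omega)]
  push_cast
  ring

lemma Amat_row_right {n i k : ℕ} (hnk : n = i + k + 1) (hk : i + 2 ≤ n / 2) :
    Amat n k (k + 1) = 4 * (i : ℝ) + 4 := by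
  unfold Amat
  rw [if_neg (by omega), if_neg (by omega), if_neg (by omega), if_pos (by omega), hnk]
  push_cast
  ring

lemma Amat_row_zero {n i k c : ℕ} (hnk : n = i + k + 1) (hk : i + 2 ≤ n / 2)
    (h1 : c ≠ i + 2) (h2 : c ≠ k + 1) : Amat n k c = 0 := by
  unfold Amat
  rw [if_neg (by omega), if_neg (by omega), if_neg (by omega), if_neg (by omega)]

lemma Amat_col_zero {n i k r : ℕ} (hnk : n = i + k + 1) (hk : i + 2 ≤ n / 2)
    (h1 : r ≠ i + 1) (h2 : r ≠ k) : Amat n r (k + 1) = 0 := by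
  unfold Amat
  rw [if_neg (by omega), if_neg (by omega), if_neg (by omega), if_neg (by omega)]

lemma Amat_col_top {n i k : ℕ} (hnk : n = i + k + 1) (hk : i + 2 ≤ n / 2) :
    Amat n (i + 1) (k + 1) = 4 * (i : ℝ) + 3 := by
  unfold Amat
  rw [if_neg (by omega), if_pos (by omega)]
  push_cast
  ring

/-- Row `k` has the strict maximum of column `k + 1`. -/
lemma Amat_col_lt {n i k r : ℕ} (hnk : n = i + k + 1) (hk : i + 2 ≤ n / 2) (hr : r ≠ k) :
    Amat n r (k + 1) < Amat n k (k + 1) := by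
  have hi : (0 : ℝ) ≤ i := Nat.cast_nonneg i
  rw [Amat_row_right hnk hk]
  by_cases h : r = i + 1
  · rw [h, Amat_col_top hnk hk]
    linarith
  · rw [Amat_col_zero hnk hk h hr]
    linarith

/-- While the column player keeps playing `k + 1` from round `T` on, the row player keeps playing
`k`, and the cumulative utilities grow linearly. -/
lemma phase_invariant {n i k : ℕ} {I J : ℕ → ℕ} (hnk : n = i + k + 1) (hk : i + 2 ≤ n / 2)
    (hFP : IsFPSeq n I J) {T : ℕ} (hT : 2 ≤ T) (hI : I T = k) (m : ℕ)
    (hJ : ∀ s < m, J (T + s) = k + 1) :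
    I (T + m) = k ∧ (∀ r, Rcum n J (T + m) r = Rcum n J T r + m * Amat n r (k + 1)) ∧
      ∀ c, Ccum n I (T + m) c = Ccum n I T c + m * Amat n k c := by
  induction m with
  | zero => simp [hI]
  | succ m ih =>
    obtain ⟨h1, h2, h3⟩ := ih fun s hs => hJ s (by omega)
    have hRs : ∀ r, Rcum n J (T + (m + 1)) r =
        Rcum n J T r + ((m + 1 : ℕ) : ℝ) * Amat n r (k + 1) := fun r => by
      rw [← add_assoc, Rcum_succ _ _ _ _ (by omega), h2, hJ m (by omega)]
      push_cast
      ring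
    refine ⟨?_, hRs, fun c => ?_⟩
    · by_contra hne
      have hmem := (hFP.1 (T + (m + 1)) (by omega)).1
      -- `k` is a best row at round `T`, and has since gained strictly more than any other row.
      have hold : Rcum n J T (I (T + (m + 1))) ≤ Rcum n J T (I T) :=
        (hFP.2 T hT).1 _ hmem
      have hnew : Rcum n J (T + (m + 1)) k ≤ Rcum n J (T + (m + 1)) (I (T + (m + 1))) :=
        (hFP.2 (T + (m + 1)) (by omega)).1 k (Finset.mem_Icc.2 (by omega))
      rw [hRs, hRs] at hnew
      rw [hI] at hold
      have hlt := mul_lt_mul_of_pos_left (Amat_col_lt hnk hk hne)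
        (by positivity : (0 : ℝ) < ((m + 1 : ℕ) : ℝ))
      linarith
    · rw [← add_assoc, Ccum_succ _ _ _ _ (by omega), h3, h1]
      push_cast
      ring

/-- fourth induction step: from the first play of `(n−i−1, n−i)` to the first
play of `(n−i−1, i+2)`. -/
theorem fp_step_four
    (n : ℕ) (hn : 4 ≤ n) (hneven : Even n) (i : ℕ) (hi : i ≤ n / 2 - 2)
    (I J : ℕ → ℕ) (hFP : IsFPSeq n I J) (hI1 : I 1 = n) (hJ1 : J 1 = 1)
    (T3 : ℕ) (hT3 : 2 ≤ T3)
    (hplay : I T3 = n - i - 1 ∧ J T3 = n - i)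
    (hfirst : ∀ t, 1 ≤ t → t < T3 → (I t, J t) ≠ (n - i - 1, n - i))
    (hprev : I (T3 - 1) = i + 1 ∧ J (T3 - 1) = n - i)
    (hR : ∀ r, i + 2 ≤ r → r ≤ n - i - 2 → Rcum n J T3 r = 0)
    (hC : ∀ c, i + 2 ≤ c → c ≤ n - i - 1 → Ccum n I T3 c = 0) :
    ∃ T4, T3 < T4 ∧
      (I T4 = n - i - 1 ∧ J T4 = i + 2) ∧
      (∀ t, 1 ≤ t → t < T4 → (I t, J t) ≠ (n - i - 1, i + 2)) ∧
      (∀ t, T3 ≤ t → t ≤ T4 - 1 → I t = n - i - 1 ∧ J t = n - i) ∧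
      Rcum n J T4 (n - i - 1) ≥ (4 * (i : ℝ) + 4) * Ccum n I T3 (n - i) ∧
      (∀ r, i + 2 ≤ r → r ≤ n - i - 2 → Rcum n J T4 r = 0) ∧
      (∀ c, i + 3 ≤ c → c ≤ n - i - 1 → Ccum n I T4 c = 0) := by
  obtain ⟨k, hk⟩ : ∃ k, k = n - i - 1 := ⟨_, rfl⟩
  have hnk : n = i + k + 1 := by omega
  have hkn : i + 2 ≤ n / 2 := by omega
  have hk1 : n - i = k + 1 := by omega
  rw [← hk, hk1] at hplay
  rw [← hk] at hC ⊢
  rw [hk1]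
  have inv := phase_invariant hnk hkn hFP hT3 hplay.1
  have hC0 : Ccum n I T3 (i + 2) = 0 := hC _ le_rfl (by omega)
  have hleft := Amat_row_left hnk hkn
  have hright := Amat_row_right hnk hkn
  have hi0 : (0 : ℝ) ≤ i := Nat.cast_nonneg i
  have hleave : ∃ m, J (T3 + m) ≠ k + 1 := by
    by_contra! hcon
    obtain ⟨m, hm⟩ := exists_nat_gt (Ccum n I T3 (k + 1))
    obtain ⟨-, -, h3⟩ := inv m fun s _ => hcon s
    have hle : Ccum n I (T3 + m) (i + 2) ≤ Ccum n I (T3 + m) (J (T3 + m)) :=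
      (hFP.2 (T3 + m) (by omega)).2 _ (Finset.mem_Icc.2 (by omega))
    rw [hcon, h3, h3, hC0, hleft, hright] at hle
    linarith
  classical
  obtain ⟨m, hm, hmin⟩ : ∃ m, J (T3 + m) ≠ k + 1 ∧ ∀ s < m, J (T3 + s) = k + 1 :=
    ⟨Nat.find hleave, Nat.find_spec hleave, fun s hs => not_not.1 (Nat.find_min hleave hs)⟩
  have hmpos : 0 < m := by
    rcases Nat.eq_zero_or_pos m with rfl | h
    · exact absurd hplay.2 hm
    · exact h
  have hmR : (0 : ℝ) < m := by exact_mod_cast hmpos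
  obtain ⟨hIm, hRm, hCm⟩ := inv m hmin
  have hbest : Ccum n I (T3 + m) (k + 1) ≤ Ccum n I (T3 + m) (J (T3 + m)) :=
    (hFP.2 (T3 + m) (by omega)).2 _ (Finset.mem_Icc.2 (by omega))
  have hJm : J (T3 + m) = i + 2 := by
    by_contra hne
    -- Such a column has gained nothing since `T3`, when `k + 1` was a best column.
    have hold : Ccum n I T3 (J (T3 + m)) ≤ Ccum n I T3 (J T3) :=
      (hFP.2 T3 hT3).2 _ (hFP.1 (T3 + m) (by omega)).2
    rw [hCm, hCm, Amat_row_zero hnk hkn hne hm, hright] at hbest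
    rw [hplay.2] at hold
    have : (0 : ℝ) < m * (4 * (i : ℝ) + 4) := by positivity
    linarith
  have hphase : ∀ t, T3 ≤ t → t ≤ T3 + m - 1 → I t = k ∧ J t = k + 1 := by
    intro t h1 h2
    obtain ⟨s, rfl⟩ := Nat.exists_eq_add_of_le h1
    exact ⟨(inv s fun u hu => hmin u (by omega)).1, hmin s (by omega)⟩
  refine ⟨T3 + m, by omega, ⟨hIm, hJm⟩, ?_, hphase, ?_, ?_, ?_⟩
  · intro t h1 h2 heq
    obtain ⟨hIt, hJt⟩ := Prod.mk.inj heq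
    rcases lt_or_ge t T3 with h | h
    · -- Playing row `k` before `T3` would have given column `i + 2` positive utility.
      have hle : Amat n (I t) (i + 2) ≤ Ccum n I T3 (i + 2) :=
        Finset.single_le_sum (f := fun s => Amat n (I s) (i + 2))
          (fun s _ => Amat_nonneg n (I s) (i + 2)) (Finset.mem_Icc.2 (by omega))
      rw [hIt, hleft, hC0] at hle
      linarith
    · have := (hphase t h (by omega)).2
      omega
  · have hR0 : 0 ≤ Rcum n J T3 k := Finset.sum_nonneg fun s _ => Amat_nonneg n k (J s)
    rw [hJm, hCm, hCm, hC0, hleft, hright] at hbest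
    have hCle : Ccum n I T3 (k + 1) ≤ m := by linarith
    rw [hRm, hright]
    have := mul_le_mul_of_nonneg_left hCle (by positivity : (0 : ℝ) ≤ 4 * (i : ℝ) + 4)
    linarith
  · intro r h1 h2
    rw [hRm, hR r h1 (by omega), Amat_col_zero hnk hkn (by omega) (by omega)]
    ring
  · intro c h1 h2
    rw [hCm, hC c (by omega) h2, Amat_row_zero hnk hkn (by omega) (by omega)]
    ring
end

section
/- Let n ≥ 4 be an even integer, let A be the matrix defined below, and let i ∈ {0,…,n/2−2}. Then for every probability vector x ∈ ℝ^n (nonnegative entries summing to 1), the sum of the utilities of the columns i+2 through n−i−1 satisfies Σ_{k=i+2}^{n−i−1} (xᵀA)_k ≥ Σ_{k=i+2}^{n−i−1} x_k. -/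
/-!
Every antidiagonal entry of `A` is at least `1` and all entries are nonnegative, so the utility of
column `k` is at least `x (n + 1 - k)`. The block `i+2, …, n-i-1` is symmetric under the reflection
`k ↦ n + 1 - k`, so summing this bound over the block gives the mass of `x` on the block.
-/

open Finset

lemma Amat_nonneg_s17 (n j k : ℕ) : 0 ≤ Amat n j k := by
  unfold Amat
  split_ifs with h1 h2 h3 h4
  · have : (1 : ℝ) ≤ j := by exact_mod_cast h1.2.1
    linarith
  · have : (1 : ℝ) ≤ j := by exact_mod_cast h2.2.1
    linarith
  · have : (1 : ℝ) ≤ k := by exact_mod_cast h3.2.1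
    linarith
  · have : (j : ℝ) ≤ n := by exact_mod_cast (by omega : j ≤ n)
    linarith
  · exact le_rfl

lemma one_le_Amat_antidiag (n k : ℕ) (hn : Even n) (hk : 1 ≤ k) (hkn : k ≤ n) :
    1 ≤ Amat n (n + 1 - k) k := by
  obtain ⟨m, rfl⟩ := hn
  unfold Amat
  split_ifs with h1 h2 h3 h4
  · have : (1 : ℝ) ≤ ((m + m + 1 - k : ℕ) : ℝ) := by exact_mod_cast h1.2.1
    linarith
  · have : (1 : ℝ) ≤ ((m + m + 1 - k : ℕ) : ℝ) := by exact_mod_cast h2.2.1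
    linarith
  · have : (1 : ℝ) ≤ k := by exact_mod_cast hk
    linarith
  -- Either the row or the column index is at most `n / 2`, so the remaining branches are void.
  · omega
  · omega

/-- for any probability vector `x`, the total utility of the middle columns
`i+2, …, n−i−1` is at least the mass `x` puts on those coordinates. -/
theorem middle_cols_sum
    (n : ℕ) (hn : 4 ≤ n) (hneven : Even n) (i : ℕ) (hi : i ≤ n / 2 - 2)
    (x : ℕ → ℝ) (hx : ProbVec n x) :
    ∑ k ∈ Finset.Icc (i + 2) (n - i - 1), (∑ j ∈ Finset.Icc 1 n, x j * Amat n j k) ≥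
      ∑ k ∈ Finset.Icc (i + 2) (n - i - 1), x k := by
  have hreflect : ∑ k ∈ Finset.Icc (i + 2) (n - i - 1), x k =
      ∑ k ∈ Finset.Icc (i + 2) (n - i - 1), x (n + 1 - k) := by
    refine Finset.sum_nbij' (fun k => n + 1 - k) (fun k => n + 1 - k) ?_ ?_ ?_ ?_ ?_ <;>
      intro k hk <;> rw [Finset.mem_Icc] at hk
    · rw [Finset.mem_Icc]; omega
    · rw [Finset.mem_Icc]; omega
    · omega
    · omega
    · congr 1; omega
  rw [ge_iff_le, hreflect]
  refine Finset.sum_le_sum fun k hk => ?_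
  rw [Finset.mem_Icc] at hk
  have hmem : n + 1 - k ∈ Finset.Icc 1 n := by rw [Finset.mem_Icc]; omega
  calc x (n + 1 - k) ≤ x (n + 1 - k) * Amat n (n + 1 - k) k :=
        le_mul_of_one_le_right (hx.1 _ hmem)
          (one_le_Amat_antidiag n k hneven (by omega) (by omega))
    _ ≤ ∑ j ∈ Finset.Icc 1 n, x j * Amat n j k :=
        Finset.single_le_sum (f := fun j => x j * Amat n j k)
          (fun j hj => mul_nonneg (hx.1 j hj) (Amat_nonneg_s17 n j k)) hmem
end
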